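/- In the free group F on two generators a and b, if a cyclically reduced word w = a^{n₁} b^{m₁} a^{n₂} b^{m₂} ⋯ a^{n_k} b^{m_k} (with all n_i and all m_i nonzero, k ≥ 1) is a primitive element of F (i.e., w belongs to some free basis of F), then n_i · n_j > 0 for all i, j and m_i · m_j > 0 for all i, j; that is, all a-exponents have the same sign and all b-exponents have the same sign. -/

import Mathlib

/-- An element of the free group of rank two is *primitive* if it is part of a free
basis, equivalently it is the image of a generator under an automorphism. -/
def IsPrimitive (w : FreeGroup (Fin 2)) : Prop :=
  ∃ φ : FreeGroup (Fin 2) ≃* FreeGroup (Fin 2), φ (FreeGroup.of 0) = w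


namespace PrimSign
open FreeGroup

abbrev F := FreeGroup (Fin 2)

/-- norm as an integer -/
def nm (x : F) : ℤ := (FreeGroup.norm x : ℤ)

/-- twice the Gromov product -/
def gp (x y : F) : ℤ := nm x + nm y - nm (x⁻¹ * y)

lemma nm_inv (x : F) : nm x⁻¹ = nm x := by simp [nm]
lemma nm_mul_le (x y : F) : nm (x * y) ≤ nm x + nm y := by
  unfold nm; exact_mod_cast norm_mul_le x y
lemma nm_nonneg (x : F) : 0 ≤ nm x := by simp [nm]
lemma nm_mk_le (L : List (Fin 2 × Bool)) : nm (mk L) ≤ L.length := by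
  unfold nm; exact_mod_cast norm_mk_le
lemma nm_eq (x : F) : nm x = x.toWord.length := rfl
lemma nm_one : nm 1 = 0 := by simp [nm]
lemma nm_pos {x : F} (h : x ≠ 1) : 0 < nm x := by
  have : FreeGroup.norm x ≠ 0 := by rwa [Ne, FreeGroup.norm_eq_zero]
  unfold nm; omega

lemma isReduced_invRev {L : List (Fin 2 × Bool)} (h : IsReduced L) : IsReduced (invRev L) := by
  rw [isReduced_iff_reduce_eq] at *
  rw [reduce_invRev, h]

lemma lists_split (X Y : List (Fin 2 × Bool)) (hX : IsReduced X) (hY : IsReduced Y) :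
    ∃ P X' Y', X = P ++ X' ∧ Y = P ++ Y' ∧ IsReduced (invRev X' ++ Y') := by
  induction X generalizing Y with
  | nil => exact ⟨[], [], Y, rfl, rfl, by simpa using hY⟩
  | cons x X1 ih =>
    cases Y with
    | nil => exact ⟨[], x :: X1, [], rfl, rfl, by simpa using isReduced_invRev hX⟩
    | cons y Y1 =>
      by_cases hxy : x = y
      · subst hxy
        obtain ⟨P, X', Y', h1, h2, h3⟩ := ih Y1 (List.IsChain.tail hX)
          (List.IsChain.tail hY)
        exact ⟨x :: P, X', Y', by simp [h1], by simp [h2], h3⟩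
      · refine ⟨[], x :: X1, y :: Y1, rfl, rfl, ?_⟩
        have h1 := isReduced_invRev hX
        have e : invRev (x :: X1) = invRev X1 ++ [(x.1, !x.2)] := by simp [invRev]
        rw [e] at h1 ⊢
        rw [List.append_assoc]
        refine List.isChain_append_cons_cons.2 ⟨h1, ?_, hY⟩
        intro h
        obtain ⟨i, b⟩ := x
        obtain ⟨j, c⟩ := y
        simp only at h
        subst h
        cases b <;> cases c <;> simp_all

lemma gp_split (x y : F) : ∃ P X Y, x.toWord = P ++ X ∧ y.toWord = P ++ Y ∧
    gp x y = 2 * P.length := by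
  obtain ⟨P, X, Y, h1, h2, h3⟩ := lists_split x.toWord y.toWord isReduced_toWord isReduced_toWord
  refine ⟨P, X, Y, h1, h2, ?_⟩
  have e : x⁻¹ * y = mk (invRev X ++ Y) := by
    rw [← mk_toWord (x := x), ← mk_toWord (x := y), h1, h2, ← mul_mk, ← mul_mk, ← mul_mk, ← inv_mk]
    group
  unfold gp
  rw [e, nm_eq, nm_eq, nm_eq, toWord_mk, h3.reduce_eq, h1, h2]
  simp
  ring

lemma gp_ge (x y : F) (P X Y : List (Fin 2 × Bool)) (h1 : x.toWord = P ++ X)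
    (h2 : y.toWord = P ++ Y) : 2 * (P.length : ℤ) ≤ gp x y := by
  have e : x⁻¹ * y = mk (invRev X ++ Y) := by
    rw [← mk_toWord (x := x), ← mk_toWord (x := y), h1, h2, ← mul_mk, ← mul_mk, ← mul_mk, ← inv_mk]
    group
  unfold gp
  have := nm_mk_le (invRev X ++ Y)
  rw [e, nm_eq x, nm_eq y, h1, h2]
  simp at *
  linarith

lemma gp_comm (x y : F) : gp x y = gp y x := by
  unfold gp
  rw [← nm_inv (x⁻¹ * y)]
  simp
  ring

lemma gp_hyp (x y z : F) : gp x y ≤ gp x z ∨ gp y z ≤ gp x z := by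
  obtain ⟨P, X, Y, h1, h2, h3⟩ := gp_split x y
  obtain ⟨Q, Y', Z, h4, h5, h6⟩ := gp_split y z
  rw [h3, h6]
  rcases List.prefix_or_prefix_of_prefix (l₁ := P) (l₂ := Q) (l₃ := y.toWord) ⟨Y, h2.symm⟩
    ⟨Y', h4.symm⟩ with ⟨R, rfl⟩ | ⟨R, rfl⟩
  · left; exact gp_ge x z P X (R ++ Z) h1 (by simp [h5])
  · right; exact gp_ge x z Q (R ++ X) Z (by simp [h1]) h5

lemma nm_sq {x : F} (h : x ≠ 1) : nm x < nm (x * x) := by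
  have h1 := reduceCyclically.reduce_flatten_replicate_succ (isReduced_toWord (x := x)) 1
  have h2 := reduceCyclically.conj_conjugator_reduceCyclically x.toWord
  have h3 : (x * x).toWord = reduce (List.replicate (1 + 1) x.toWord).flatten := by
    simp [toWord_mul, List.replicate]
  rw [nm_eq, nm_eq, h3, h1]
  nth_rw 1 [← h2]
  have : reduceCyclically x.toWord ≠ [] := by
    intro h0
    apply h
    rw [h0] at h2
    rw [← mk_toWord (x := x), ← h2, List.append_nil, ← mul_mk, ← inv_mk, mul_inv_cancel]
  have := List.length_pos_iff.2 this
  simp [List.replicate]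
  omega

/-- the conjugating move -/
lemma conj_move (x y : F) (h1 : gp y x = nm x) (h2 : gp x⁻¹ y⁻¹ = nm x) (h3 : nm x ≤ nm y) :
    ∃ p : F, nm (p * x * p⁻¹) + nm (p * (x⁻¹ * y) * p⁻¹) ≤ nm y := by
  obtain ⟨Q, Y, R, a1, a2, a3⟩ := gp_split y x
  obtain ⟨S, X', Y', b1, b2, b3⟩ := gp_split x⁻¹ y⁻¹
  have c1 : x.toWord = invRev X' ++ invRev S := by
    have := congrArg invRev b1
    rwa [toWord_inv, invRev_invRev, invRev_append] at this
  have c2 : y.toWord = invRev Y' ++ invRev S := by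
    have := congrArg invRev b2
    rwa [toWord_inv, invRev_invRev, invRev_append] at this
  have l1 : (x.toWord.length : ℤ) = 2 * Q.length := by rw [← nm_eq]; linarith
  have l2 : (x.toWord.length : ℤ) = 2 * S.length := by rw [← nm_eq]; linarith
  have l3 : x.toWord.length = Q.length + R.length := by rw [a2]; simp
  have l4 : x.toWord.length = X'.length + S.length := by rw [c1]; simp
  have l5 : y.toWord.length = Y'.length + S.length := by rw [c2]; simp
  have l6 : x.toWord.length ≤ y.toWord.length := by rw [nm_eq, nm_eq] at h3; exact_mod_cast h3
  have e : Q = invRev X' ∧ R = invRev S := by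
    apply List.append_inj (by rw [← a2, c1]); simp; omega
  obtain ⟨T, hT⟩ : Q <+: invRev Y' := by
    apply List.prefix_of_prefix_length_le (l₃ := y.toWord) ⟨Y, a1.symm⟩ ⟨_, c2.symm⟩
    simp; omega
  have ex : x = mk Q * mk R := by rw [mul_mk, ← a2, mk_toWord]
  have ey : y = mk Q * mk T * mk R := by rw [mul_mk, mul_mk, hT, e.2, ← c2, mk_toWord]
  refine ⟨mk R, ?_⟩
  have f1 : mk R * x * (mk R)⁻¹ = mk R * mk Q := by rw [ex]; group
  have f2 : mk R * (x⁻¹ * y) * (mk R)⁻¹ = mk T := by rw [ex, ey]; group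
  rw [f1, f2, mul_mk]
  have g1 := nm_mk_le (R ++ Q)
  have g2 := nm_mk_le T
  have g3 := congrArg List.length hT
  rw [nm_eq y]
  simp at g1 g3
  omega

lemma growth (e : Fin 2 × Bool → F) (hpos : ∀ s, 0 < nm (e s))
    (h1 : ∀ t s : Fin 2 × Bool, (t.1 = s.1 → t.2 = s.2) → gp (e t)⁻¹ (e s) ≤ nm (e s))
    (h2 : ∀ t s r : Fin 2 × Bool, (t.1 = s.1 → t.2 = s.2) → (s.1 = r.1 → s.2 = r.2) →
      gp (e t)⁻¹ (e s) + gp (e s)⁻¹ (e r) < 2 * nm (e s))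
    (L : List (Fin 2 × Bool)) : ∀ t, IsReduced (t :: L) →
      2 * (L.length : ℤ) ≤ 2 * nm (L.map e).prod - gp (e t)⁻¹ (L.map e).prod ∧
      ∀ s ∈ L.head?, gp (e t)⁻¹ (L.map e).prod = gp (e t)⁻¹ (e s) := by
  induction L with
  | nil =>
    intro t _
    simp [gp, nm_one, nm_inv]
  | cons s L' ih =>
    intro t ht
    rw [isReduced_cons_cons] at ht
    obtain ⟨hts, hs⟩ := ht
    obtain ⟨i1, i2⟩ := ih s hs
    set g := (L'.map e).prod with hg
    have hlt : gp (e t)⁻¹ (e s) + gp (e s)⁻¹ g < 2 * nm (e s) := by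
      cases L' with
      | nil =>
        have := h1 t s hts
        have := hpos s
        have : gp (e s)⁻¹ g = 0 := by simp [hg, gp, nm_one, nm_inv]
        linarith
      | cons r L'' =>
        rw [i2 r (by simp)]
        rw [isReduced_cons_cons] at hs
        exact h2 t s r hts hs.1
    have e1 : gp (e s) (e s * g) = 2 * nm (e s) - gp (e s)⁻¹ g := by
      simp [gp, nm_inv]; ring
    have e2 : nm (e s * g) = nm (e s) + nm g - gp (e s)⁻¹ g := by
      simp [gp, nm_inv]
    have e3 : gp (e t)⁻¹ (e s * g) = gp (e t)⁻¹ (e s) := by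
      have a := gp_hyp (e t)⁻¹ (e s) (e s * g)
      have b := gp_hyp (e t)⁻¹ (e s * g) (e s)
      rw [gp_comm (e s * g) (e s)] at b
      rcases a with a | a <;> rcases b with b | b <;> linarith
    simp only [List.map_cons, List.prod_cons, List.length_cons, List.head?_cons]
    rw [← hg, e3]
    refine ⟨?_, by simp⟩
    push_cast
    have : 2 * (1 : ℤ) ≤ 2 * nm (e s) - gp (e t)⁻¹ (e s) - gp (e s)⁻¹ g := by
      obtain ⟨_, _, _, _, _, q1⟩ := gp_split (e t)⁻¹ (e s)
      obtain ⟨_, _, _, _, _, q2⟩ := gp_split (e s)⁻¹ g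
      omega
    linarith

/-- letters -/
def ev (u v : F) (s : Fin 2 × Bool) : F := cond s.2 (![u, v] s.1) (![u, v] s.1)⁻¹

lemma ev_inv (u v : F) (i : Fin 2) (b : Bool) : (ev u v (i, b))⁻¹ = ev u v (i, !b) := by
  cases b <;> simp [ev]

lemma growth' (u v : F) (hu : u ≠ 1) (hv : v ≠ 1)
    (hmul : ∀ s t : Fin 2 × Bool, s.1 ≠ t.1 → nm (ev u v s) ≤ nm (ev u v t * ev u v s) ∧
      nm (ev u v t) ≤ nm (ev u v t * ev u v s))
    (hconj : ∀ s t : Fin 2 × Bool, s.1 ≠ t.1 → ∀ p, nm (ev u v s) + nm (ev u v t) ≤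
      nm (p * ev u v s * p⁻¹) + nm (p * ((ev u v s)⁻¹ * ev u v t) * p⁻¹))
    (L : List (Fin 2 × Bool)) (hL : IsReduced L) :
    (L.length : ℤ) ≤ nm (L.map (ev u v)).prod := by
  set e := ev u v with he
  have hne : ∀ s, e s ≠ 1 := by
    rintro ⟨i, b⟩
    fin_cases i <;> cases b <;> simp [he, ev, hu, hv]
  have hpos : ∀ s, 0 < nm (e s) := fun s => nm_pos (hne s)
  have hgp : ∀ x y : F, gp x⁻¹ y = nm x + nm y - nm (x * y) := by
    intro x y; simp [gp, nm_inv]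
  have hlt : ∀ s, gp (e s)⁻¹ (e s) < nm (e s) := by
    intro s
    have := nm_sq (hne s)
    rw [hgp]; linarith
  have key : ∀ t s : Fin 2 × Bool, (t.1 = s.1 → t.2 = s.2) → gp (e t)⁻¹ (e s) ≤ nm (e s) := by
    intro t s h
    by_cases hi : t.1 = s.1
    · have : t = s := Prod.ext hi (h hi)
      subst this
      exact (hlt t).le
    · have := (hmul s t (Ne.symm hi)).2
      rw [hgp]; linarith
  have key' : ∀ t s : Fin 2 × Bool, (t.1 = s.1 → t.2 = s.2) → gp (e t)⁻¹ (e s) ≤ nm (e t) := by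
    intro t s h
    by_cases hi : t.1 = s.1
    · have : t = s := Prod.ext hi (h hi)
      subst this
      exact (hlt t).le
    · have := (hmul s t (Ne.symm hi)).1
      rw [hgp]; linarith
  have key2 : ∀ t s r : Fin 2 × Bool, (t.1 = s.1 → t.2 = s.2) → (s.1 = r.1 → s.2 = r.2) →
      gp (e t)⁻¹ (e s) + gp (e s)⁻¹ (e r) < 2 * nm (e s) := by
    intro t s r hts hsr
    have k1 := key t s hts
    have k2 := key' s r hsr
    by_contra hcon
    have q1 : gp (e t)⁻¹ (e s) = nm (e s) := by linarith
    have q2 : gp (e s)⁻¹ (e r) = nm (e s) := by linarith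
    have i1 : t.1 ≠ s.1 := by
      intro hi
      have : t = s := Prod.ext hi (hts hi)
      subst this
      have := hlt t
      linarith
    have i2 : s.1 ≠ r.1 := by
      intro hi
      have : s = r := Prod.ext hi (hsr hi)
      subst this
      have := hlt s
      linarith
    have i3 : t.1 = r.1 := by omega
    obtain ⟨i, b⟩ := t
    obtain ⟨j, c⟩ := r
    simp only at i3
    subst i3
    by_cases hbc : b = c
    · subst hbc
      have hinv : e (i, !b) = (e (i, b))⁻¹ := (ev_inv u v i b).symm
      have k3 := key' (i, b) s hts
      obtain ⟨p, hp⟩ := conj_move (e s) (e (i, b))⁻¹ q1 (by rw [inv_inv]; exact q2)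
        (by rw [nm_inv]; linarith)
      have := hconj s (i, !b) (Ne.symm i1) p
      rw [hinv] at this
      have := hpos s
      linarith
    · have hc : c = !b := by cases b <;> cases c <;> simp_all
      have hinv : e (i, c) = (e (i, b))⁻¹ := by rw [hc]; exact (ev_inv u v i b).symm
      rw [hinv] at q2
      have := hlt s
      rcases gp_hyp (e s)⁻¹ (e (i, b))⁻¹ (e s) with h | h <;> linarith
  cases L with
  | nil => simp [nm_one]
  | cons s L' =>
    have := (growth e hpos key key2 (s :: L') s (by rw [isReduced_cons_cons]; exact ⟨by simp, hL⟩)).1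
    obtain ⟨_, _, _, _, _, q⟩ := gp_split (e s)⁻¹ ((s :: L').map e).prod
    linarith

structure Closed (Q : F → F → Prop) : Prop where
  swap : ∀ {u v}, Q u v → Q v u
  inv : ∀ {u v}, Q u v → Q u⁻¹ v
  mul : ∀ {u v}, Q u v → Q (u * v) v
  conj : ∀ {u v} (c : F), Q u v → Q (c * u * c⁻¹) (c * v * c⁻¹)

namespace Closed
variable {Q : F → F → Prop}

lemma inv2 (h : Closed Q) {u v : F} (q : Q u v) : Q u v⁻¹ := h.swap (h.inv (h.swap q))
lemma inv_iff (h : Closed Q) {u v : F} : Q u⁻¹ v ↔ Q u v :=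
  ⟨fun q => by simpa using h.inv q, h.inv⟩
lemma inv2_iff (h : Closed Q) {u v : F} : Q u v⁻¹ ↔ Q u v :=
  ⟨fun q => by simpa using h.inv2 q, h.inv2⟩
lemma swap_iff (h : Closed Q) {u v : F} : Q u v ↔ Q v u := ⟨h.swap, h.swap⟩
lemma mul_iff (h : Closed Q) {u v : F} : Q (u * v) v ↔ Q u v := by
  refine ⟨fun q => ?_, h.mul⟩
  have := h.mul (h.inv2 q)
  rw [h.inv2_iff] at this
  simpa using this
lemma conj_iff (h : Closed Q) {u v : F} (c : F) : Q (c * u * c⁻¹) (c * v * c⁻¹) ↔ Q u v := by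
  refine ⟨fun q => ?_, h.conj c⟩
  have := h.conj c⁻¹ q
  simpa [mul_assoc] using this
lemma mul_iff' (h : Closed Q) {u v : F} : Q (v * u) v ↔ Q u v := by
  rw [← h.mul_iff (u := u), ← h.conj_iff (u := u * v) v]
  simp [mul_assoc]
lemma ev_iff (h : Closed Q) {u v : F} (s t : Fin 2 × Bool) (hst : s.1 ≠ t.1) :
    Q (ev u v s) (ev u v t) ↔ Q u v := by
  obtain ⟨i, b⟩ := s
  obtain ⟨j, c⟩ := t
  have := h.swap_iff (u := u) (v := v)
  fin_cases i <;> fin_cases j <;> cases b <;> cases c <;>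
    simp_all [ev, h.inv_iff, h.inv2_iff]

end Closed

def Gen (u v : F) : Prop := ∀ H : Subgroup F, u ∈ H → v ∈ H → H = ⊤

lemma gen_closed : Closed Gen where
  swap h H a b := h H b a
  inv h H a b := h H (by simpa using a) b
  mul h H a b := h H ((Subgroup.mul_mem_cancel_right H b).1 a) b
  conj c h H a b := by
    have := h (H.comap (MulAut.conj c).toMonoidHom) (by simpa using a) (by simpa using b)
    rw [eq_top_iff]
    intro x _
    have hx : c⁻¹ * x * c ∈ H.comap (MulAut.conj c).toMonoidHom := by rw [this]; trivial
    simpa [mul_assoc] using hx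

lemma nm_ev (u v : F) (s t : Fin 2 × Bool) (hst : s.1 ≠ t.1) :
    nm (ev u v s) + nm (ev u v t) = nm u + nm v := by
  obtain ⟨i, b⟩ := s
  obtain ⟨j, c⟩ := t
  fin_cases i <;> fin_cases j <;> cases b <;> cases c <;>
    simp_all [ev, nm_inv, add_comm]

lemma gen_ne_one {u v : F} (h : Gen u v) : u ≠ 1 := by
  rintro rfl
  have := h (Subgroup.zpowers v) (one_mem _) (Subgroup.mem_zpowers v)
  have h0 : (of 0 : F) ∈ Subgroup.zpowers v := by rw [this]; trivial
  have h1 : (of 1 : F) ∈ Subgroup.zpowers v := by rw [this]; trivial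
  obtain ⟨i, hi⟩ := Subgroup.mem_zpowers_iff.1 h0
  obtain ⟨j, hj⟩ := Subgroup.mem_zpowers_iff.1 h1
  have hc : (of 0 : F) * of 1 = of 1 * of 0 := by
    rw [← hi, ← hj]; exact (Commute.zpow_zpow_self v i j).eq
  revert hc
  decide

theorem nielsen {Q : F → F → Prop} (hQ : Closed Q) (hbase : Q (of 0) (of 1)) :
    ∀ (n : ℕ) (u v : F), Gen u v → nm u + nm v < n → Q u v := by
  intro n
  induction n with
  | zero =>
    intro u v _ h
    have := nm_nonneg u
    have := nm_nonneg v
    push_cast at h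
    omega
  | succ n ih =>
    intro u v hG hn
    have ih' : ∀ u' v', Gen u' v' → nm u' + nm v' < nm u + nm v → Q u' v' := by
      intro u' v' g l
      apply ih u' v' g
      push_cast at hn
      omega
    by_contra hnot
    have hmul : ∀ s t : Fin 2 × Bool, s.1 ≠ t.1 → nm (ev u v s) ≤ nm (ev u v t * ev u v s) ∧
      nm (ev u v t) ≤ nm (ev u v t * ev u v s) := by
      intro s t hst
      have hs := nm_ev u v s t hst
      constructor
      · by_contra hlt
        apply hnot
        rw [← hQ.ev_iff s t hst, ← hQ.mul_iff']
        apply ih'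
        · rw [gen_closed.mul_iff', gen_closed.ev_iff s t hst]; exact hG
        · omega
      · by_contra hlt
        apply hnot
        rw [← hQ.ev_iff t s hst.symm, ← hQ.mul_iff]
        apply ih'
        · rw [gen_closed.mul_iff, gen_closed.ev_iff t s hst.symm]; exact hG
        · omega
    have hc0 : ∀ {Q : F → F → Prop} (hQ : Closed Q) (x y p : F),
        Q (p * x * p⁻¹) (p * (x⁻¹ * y) * p⁻¹) ↔ Q x y := by
      intro Q hQ x y p
      rw [hQ.conj_iff, hQ.swap_iff, ← hQ.inv2_iff, hQ.mul_iff', hQ.inv2_iff, hQ.swap_iff]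
    have hconj : ∀ s t : Fin 2 × Bool, s.1 ≠ t.1 → ∀ p, nm (ev u v s) + nm (ev u v t) ≤
      nm (p * ev u v s * p⁻¹) + nm (p * ((ev u v s)⁻¹ * ev u v t) * p⁻¹) := by
      intro s t hst p
      have hs := nm_ev u v s t hst
      by_contra hlt
      apply hnot
      rw [← hQ.ev_iff s t hst, ← hc0 hQ _ _ p]
      apply ih'
      · rw [hc0 gen_closed, gen_closed.ev_iff s t hst]; exact hG
      · omega
    have hgrow := growth' u v (gen_ne_one hG) (gen_ne_one (gen_closed.swap hG)) hmul hconj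
    have hsurj : ∀ i : Fin 2, ∃ s, ev u v s = of i := by
      intro i
      have hr : (FreeGroup.lift ![u, v]).range = ⊤ :=
        hG _ ⟨of 0, by simp⟩ ⟨of 1, by simp⟩
      obtain ⟨x, hx⟩ : (of i : F) ∈ (FreeGroup.lift ![u, v]).range := by rw [hr]; trivial
      have hx2 : (x.toWord.map (ev u v)).prod = of i := by
        rw [← hx, ← mk_toWord (x := x), lift_mk, mk_toWord]; rfl
      have := hgrow x.toWord isReduced_toWord
      rw [hx2] at this
      have h1 : nm (of i) = 1 := by simp [nm]
      rw [h1] at this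
      match hw : x.toWord with
      | [] =>
        rw [hw] at hx2
        simp at hx2
      | [s] =>
        rw [hw] at hx2
        exact ⟨s, by simpa using hx2⟩
      | s :: t :: l =>
        rw [hw] at this
        simp at this
        omega
    obtain ⟨s, hs⟩ := hsurj 0
    obtain ⟨t, ht⟩ := hsurj 1
    by_cases hst : s.1 = t.1
    · obtain ⟨i, b⟩ := s
      obtain ⟨j, c⟩ := t
      simp only at hst
      subst hst
      by_cases hbc : b = c
      · subst hbc
        rw [hs] at ht
        revert ht; decide
      · have hc : c = !b := by cases b <;> cases c <;> simp_all
        rw [hc, ← ev_inv, hs] at ht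
        revert ht; decide
    · apply hnot
      rw [← hQ.ev_iff s t hst, hs, ht]
      exact hbase

/-- positive pairs over the base `x`, `y` -/
inductive Pos (x y : F) : F → F → Prop
  | base : Pos x y x y
  | swap {u v : F} : Pos x y u v → Pos x y v u
  | mulr {u v : F} : Pos x y u v → Pos x y (u * v) v
  | mull {u v : F} : Pos x y u v → Pos x y (v * u) v

def Good (u v : F) : Prop :=
  ∃ x y c u' v' : F, (x = of 0 ∨ x = (of 0)⁻¹) ∧ (y = of 1 ∨ y = (of 1)⁻¹) ∧ Pos x y u' v' ∧
    (u = c * u' * c⁻¹ ∨ u = c * u'⁻¹ * c⁻¹) ∧ (v = c * v' * c⁻¹ ∨ v = c * v'⁻¹ * c⁻¹)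

lemma Good.swap {u v : F} : Good u v → Good v u := by
  rintro ⟨x, y, c, u', v', hx, hy, hp, hu, hv⟩
  exact ⟨x, y, c, v', u', hx, hy, hp.swap, hv, hu⟩

lemma Good.inv {u v : F} : Good u v → Good u⁻¹ v := by
  rintro ⟨x, y, c, u', v', hx, hy, hp, hu, hv⟩
  refine ⟨x, y, c, u', v', hx, hy, hp, ?_, hv⟩
  rcases hu with rfl | rfl
  · right; group
  · left; group

lemma Good.inv2 {u v : F} (h : Good u v) : Good u v⁻¹ := h.swap.inv.swap

lemma Good.conj {u v : F} (d : F) : Good u v → Good (d * u * d⁻¹) (d * v * d⁻¹) := by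
  rintro ⟨x, y, c, u', v', hx, hy, hp, hu, hv⟩
  refine ⟨x, y, d * c, u', v', hx, hy, hp, ?_, ?_⟩
  · rcases hu with rfl | rfl
    · left; group
    · right; group
  · rcases hv with rfl | rfl
    · left; group
    · right; group

lemma Good.unconj {u v : F} (d : F) (h : Good (d * u * d⁻¹) (d * v * d⁻¹)) : Good u v := by
  have := h.conj d⁻¹
  simpa [mul_assoc] using this

lemma Pos.good {x y u v : F} (hx : x = of 0 ∨ x = (of 0)⁻¹) (hy : y = of 1 ∨ y = (of 1)⁻¹)
    (h : Pos x y u v) : Good u v :=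
  ⟨x, y, 1, u, v, hx, hy, h, by simp, by simp⟩

lemma Pos.good_div {x y u v : F} (hx : x = of 0 ∨ x = (of 0)⁻¹) (hy : y = of 1 ∨ y = (of 1)⁻¹)
    (h : Pos x y u v) : Good (u * v⁻¹) v ∧ Good (v * u⁻¹) u := by
  induction h with
  | base =>
    constructor
    · have hy' : y⁻¹ = of 1 ∨ y⁻¹ = (of 1)⁻¹ := by
        rcases hy with rfl | rfl <;> simp
      simpa using (Pos.good hx hy' (Pos.mulr (Pos.base (x := x) (y := y⁻¹)))).inv2
    · have hx' : x⁻¹ = of 0 ∨ x⁻¹ = (of 0)⁻¹ := by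
        rcases hx with rfl | rfl <;> simp
      simpa using (Pos.good hx' hy (Pos.mulr (Pos.base (x := x⁻¹) (y := y)).swap)).inv2
  | swap _ ih => exact ⟨ih.2, ih.1⟩
  | @mulr u v h ih =>
    constructor
    · simpa using Pos.good hx hy h
    · have := (Pos.good hx hy (h.swap.mull).swap).inv
      simpa using this
  | @mull u v h ih =>
    constructor
    · have := (Pos.good hx hy h).conj v
      simpa using this
    · have := (Pos.good hx hy (h.swap.mull).swap).inv.conj v
      simpa [mul_assoc] using this

lemma Good.mul {u v : F} : Good u v → Good (u * v) v := by
  rintro ⟨x, y, c, u', v', hx, hy, hp, hu, hv⟩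
  rcases hu with rfl | rfl <;> rcases hv with rfl | rfl
  · have := (Pos.good hx hy hp.mulr).conj c
    simpa [mul_assoc] using this
  · have := (hp.good_div hx hy).1.inv2.conj c
    simpa [mul_assoc] using this
  · have := ((hp.good_div hx hy).1.inv.conj (v'⁻¹)).conj c
    simpa [mul_assoc] using this
  · have := (Pos.good hx hy hp.mull).inv.inv2.conj c
    simpa [mul_assoc] using this

lemma good_closed : Closed Good where
  swap := Good.swap
  inv := Good.inv
  mul := Good.mul
  conj := Good.conj

/-- weight -/
def wt (ε δ : ℤ) : F →* Multiplicative ℤ :=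
  FreeGroup.lift ![Multiplicative.ofAdd ε, Multiplicative.ofAdd δ]

lemma Pos.bound {x y u v : F} (σ : F →* Multiplicative ℤ) (hx : nm x ≤ (σ x).toAdd)
    (hy : nm y ≤ (σ y).toAdd) (h : Pos x y u v) : nm u ≤ (σ u).toAdd ∧ nm v ≤ (σ v).toAdd := by
  induction h with
  | base => exact ⟨hx, hy⟩
  | swap _ ih => exact ih.symm
  | @mulr u v _ ih =>
    refine ⟨?_, ih.2⟩
    have := nm_mul_le u v
    rw [_root_.map_mul, toAdd_mul]
    linarith
  | @mull u v _ ih =>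
    refine ⟨?_, ih.2⟩
    have := nm_mul_le v u
    rw [_root_.map_mul, toAdd_mul]
    linarith

lemma nm_pow_le (x : F) (N : ℕ) : nm (x ^ N) ≤ N * nm x := by
  induction N with
  | zero => simp [nm_one]
  | succ N ih =>
    rw [pow_succ]
    have := nm_mul_le (x ^ N) x
    push_cast
    linarith

lemma Good.stable {w v : F} (h : Good w v) : ∃ ε δ K : ℤ, |ε| = 1 ∧ |δ| = 1 ∧
    ∀ N : ℕ, nm (w ^ N) ≤ N * |(wt ε δ w).toAdd| + K := by
  obtain ⟨x, y, c, u', v', hx, hy, hp, hu, hv⟩ := h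
  obtain ⟨ε, hε, hxε⟩ : ∃ ε : ℤ, |ε| = 1 ∧ ∀ δ, nm x ≤ (wt ε δ x).toAdd := by
    rcases hx with rfl | rfl
    · exact ⟨1, by simp, fun δ => by simp [wt, nm]⟩
    · exact ⟨-1, by simp, fun δ => by simp [wt, nm]⟩
  obtain ⟨δ, hδ, hyδ⟩ : ∃ δ : ℤ, |δ| = 1 ∧ ∀ ε, nm y ≤ (wt ε δ y).toAdd := by
    rcases hy with rfl | rfl
    · exact ⟨1, by simp, fun δ => by simp [wt, nm]⟩
    · exact ⟨-1, by simp, fun δ => by simp [wt, nm]⟩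
  refine ⟨ε, δ, nm c + nm c, hε, hδ, fun N => ?_⟩
  have hb := (hp.bound (wt ε δ) (hxε δ) (hyδ ε)).1
  have key : ∀ z : F, nm z = nm u' → |(wt ε δ z).toAdd| = |(wt ε δ u').toAdd| →
      nm ((c * z * c⁻¹) ^ N) ≤ N * |(wt ε δ (c * z * c⁻¹)).toAdd| + (nm c + nm c) := by
    intro z hz hz2
    have e : (wt ε δ (c * z * c⁻¹)) = wt ε δ z := by
      rw [_root_.map_mul, _root_.map_mul, _root_.map_inv, mul_right_comm, mul_inv_cancel, one_mul]
    rw [e, hz2, conj_pow]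
    have h1 := nm_mul_le (c * z ^ N) c⁻¹
    have h2 := nm_mul_le c (z ^ N)
    have h3 := nm_pow_le z N
    rw [nm_inv] at h1
    have h4 : nm z ≤ |(wt ε δ u').toAdd| := by rw [hz]; exact hb.trans (le_abs_self _)
    have h5 : (N : ℤ) * nm z ≤ N * |(wt ε δ u').toAdd| :=
      mul_le_mul_of_nonneg_left h4 (by positivity)
    linarith
  rcases hu with rfl | rfl
  · exact key u' rfl rfl
  · exact key u'⁻¹ (nm_inv _) (by simp)

/-- explicit reduced word -/
def wd : List (ℤ × ℤ) → List (Fin 2 × Bool)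
  | [] => []
  | p :: l => List.replicate p.1.natAbs (0, decide (0 < p.1)) ++
      (List.replicate p.2.natAbs (1, decide (0 < p.2)) ++ wd l)

lemma mk_rep (i : Fin 2) (n : ℤ) : mk (List.replicate n.natAbs (i, decide (0 < n))) =
    (of i : F) ^ n := by
  have h1 : ∀ k : ℕ, mk (List.replicate k (i, true)) = (of i : F) ^ k := by
    intro k
    rw [← toWord_of_pow, mk_toWord]
  have h2 : ∀ k : ℕ, mk (List.replicate k (i, false)) = ((of i : F) ^ k)⁻¹ := by
    intro k
    rw [← h1, inv_mk]
    simp [invRev]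
  rcases lt_or_ge 0 n with h | h
  · lift n to ℕ using h.le
    have hd : decide ((0 : ℤ) < (n : ℤ)) = true := by simpa using h
    rw [hd, Int.natAbs_natCast, h1, zpow_natCast]
  · obtain ⟨k, rfl⟩ : ∃ k : ℕ, n = -k := ⟨n.natAbs, by omega⟩
    have hd : decide ((0 : ℤ) < -(k : ℤ)) = false := by simp
    rw [hd, Int.natAbs_neg, Int.natAbs_natCast, h2, zpow_neg, zpow_natCast]

lemma mk_wd (l : List (ℤ × ℤ)) :
    mk (wd l) = (l.map (fun p => (of 0 : F) ^ p.1 * of 1 ^ p.2)).prod := by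
  induction l with
  | nil => simp [wd, one_eq_mk]
  | cons p l ih =>
    rw [wd, ← mul_mk, ← mul_mk, ih, mk_rep, mk_rep]
    simp [mul_assoc]

lemma rep_red (s : Fin 2 × Bool) (k : ℕ) : IsReduced (List.replicate k s) := by
  unfold FreeGroup.IsReduced
  exact List.isChain_replicate_of_rel k (by simp)

lemma wd_red (l : List (ℤ × ℤ)) (hl : ∀ p ∈ l, p.1 ≠ 0 ∧ p.2 ≠ 0) :
    IsReduced (wd l) ∧ ∀ z ∈ (wd l).head?, z.1 = 0 := by
  induction l with
  | nil => simp [wd]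
  | cons p l ih =>
    obtain ⟨h1, h2⟩ := ih (fun q hq => hl q (by simp [hq]))
    obtain ⟨hp1, hp2⟩ := hl p (by simp)
    obtain ⟨a, ha⟩ : ∃ a, p.1.natAbs = a + 1 := ⟨p.1.natAbs - 1, by omega⟩
    obtain ⟨b, hb⟩ : ∃ b, p.2.natAbs = b + 1 := ⟨p.2.natAbs - 1, by omega⟩
    have r2 : IsReduced (List.replicate p.2.natAbs (1, decide (0 < p.2)) ++ wd l) := by
      refine List.isChain_append.2 ⟨rep_red _ _, h1, ?_⟩
      intro x hx y hy hxy
      have hx' := List.eq_of_mem_replicate (List.mem_of_mem_getLast? hx)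
      rw [hx', h2 y hy] at hxy
      simp at hxy
    constructor
    · refine List.isChain_append.2 ⟨rep_red _ _, r2, ?_⟩
      intro x hx y hy hxy
      have hx' := List.eq_of_mem_replicate (List.mem_of_mem_getLast? hx)
      rw [hb, List.replicate_succ] at hy
      simp at hy
      rw [hx', ← hy] at hxy
      simp at hxy
    · intro z hz
      rw [wd, ha, List.replicate_succ] at hz
      simp at hz
      rw [← hz]

lemma wd_len (l : List (ℤ × ℤ)) : ((wd l).length : ℤ) = (l.map (fun p => |p.1| + |p.2|)).sum := by
  induction l with
  | nil => simp [wd]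
  | cons p l ih =>
    simp [wd, ih]
    ring

lemma nm_prod (l : List (ℤ × ℤ)) (hl : ∀ p ∈ l, p.1 ≠ 0 ∧ p.2 ≠ 0) :
    nm (l.map (fun p => (of 0 : F) ^ p.1 * of 1 ^ p.2)).prod =
      (l.map (fun p => |p.1| + |p.2|)).sum := by
  rw [← mk_wd, ← wd_len, nm_eq, toWord_mk, (wd_red l hl).1.reduce_eq]

lemma nm_prod_pow (l : List (ℤ × ℤ)) (hl : ∀ p ∈ l, p.1 ≠ 0 ∧ p.2 ≠ 0) (N : ℕ) :
    nm ((l.map (fun p => (of 0 : F) ^ p.1 * of 1 ^ p.2)).prod ^ N) =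
      N * (l.map (fun p => |p.1| + |p.2|)).sum := by
  have := nm_prod (List.replicate N l).flatten (by
    intro p hp
    simp at hp
    exact hl p hp.2)
  simpa [List.map_flatten, List.prod_flatten, List.sum_flatten] using this

lemma wt_prod (ε δ : ℤ) (l : List (ℤ × ℤ)) :
    (wt ε δ (l.map (fun p => (of 0 : F) ^ p.1 * of 1 ^ p.2)).prod).toAdd =
      (l.map Prod.fst).sum * ε + (l.map Prod.snd).sum * δ := by
  induction l with
  | nil => simp
  | cons p l ih =>
    simp only [List.map_cons, List.prod_cons, List.sum_cons, _root_.map_mul, toAdd_mul, ih]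
    simp [wt]
    ring

lemma same_sign {k : ℕ} (n : Fin k → ℤ) (hn : ∀ i, n i ≠ 0) (h : ∑ i, |n i| ≤ |∑ i, n i|) :
    ∀ i j, 0 < n i * n j := by
  have key : ∀ f : Fin k → ℤ, (∀ i, f i ≠ 0) → ∑ i, |f i| ≤ ∑ i, f i → ∀ i, 0 < f i := by
    intro f hf hs i
    have h1 : ∀ i ∈ Finset.univ, f i ≤ |f i| := fun i _ => le_abs_self _
    have h2 := (Finset.sum_eq_sum_iff_of_le h1).1 (le_antisymm (Finset.sum_le_sum h1) hs) i (by simp)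
    have h3 := abs_pos.2 (hf i)
    linarith
  intro i j
  rcases abs_cases (∑ i, n i) with ⟨h1, _⟩ | ⟨h1, _⟩
  · rw [h1] at h
    exact mul_pos (key n hn h i) (key n hn h j)
  · rw [h1, ← Finset.sum_neg_distrib] at h
    have h' : ∑ i, |(-n i)| ≤ ∑ i, -n i := by simpa using h
    have a := key (fun i => -n i) (fun i => by simpa using hn i) h' i
    have b := key (fun i => -n i) (fun i => by simpa using hn i) h' j

    nlinarith

end PrimSign

/-- if the cyclically reduced word
`w = a^{n₁} b^{m₁} ⋯ a^{n_k} b^{m_k}` (all `nᵢ`, `mᵢ` nonzero, `k ≥ 1`) is primitive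
in the free group on `a = of 0`, `b = of 1`, then all `a`-exponents have the same
sign and all `b`-exponents have the same sign. -/
theorem primitive_word_exponent_signs (k : ℕ) (hk : 1 ≤ k) (n m : Fin k → ℤ)
    (hn : ∀ i, n i ≠ 0) (hm : ∀ i, m i ≠ 0)
    (a b : FreeGroup (Fin 2)) (ha : a = FreeGroup.of 0) (hb : b = FreeGroup.of 1)
    (w : FreeGroup (Fin 2))
    (hw : w = ((List.finRange k).map (fun i => a ^ (n i) * b ^ (m i))).prod)
    (hprim : IsPrimitive w) :
    (∀ i j, 0 < n i * n j) ∧ (∀ i j, 0 < m i * m j) := by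
  subst ha hb
  obtain ⟨φ, hφ⟩ := hprim
  have hG : PrimSign.Gen w (φ (FreeGroup.of 1)) := by
    intro H h0 h1
    rw [← hφ] at h0
    have hc : H.comap φ.toMonoidHom = ⊤ := by
      rw [eq_top_iff, ← FreeGroup.closure_range_of, Subgroup.closure_le]
      rintro _ ⟨i, rfl⟩
      fin_cases i
      · exact h0
      · exact h1
    rw [eq_top_iff]
    intro x _
    have hx : φ.symm x ∈ H.comap φ.toMonoidHom := by rw [hc]; trivial
    simpa using hx
  have hgood : PrimSign.Good w (φ (FreeGroup.of 1)) :=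
    PrimSign.nielsen PrimSign.good_closed
      (PrimSign.Pos.good (Or.inl rfl) (Or.inl rfl) PrimSign.Pos.base)
      ((PrimSign.nm w + PrimSign.nm (φ (FreeGroup.of 1))).toNat + 1) _ _ hG (by
        push_cast
        have := Int.self_le_toNat (PrimSign.nm w + PrimSign.nm (φ (FreeGroup.of 1)))
        omega)
  obtain ⟨ε, δ, K, hε, hδ, hst⟩ := hgood.stable
  set l : List (ℤ × ℤ) := (List.finRange k).map (fun i => (n i, m i)) with hl
  have hw' : w = (l.map (fun p => (FreeGroup.of 0 : FreeGroup (Fin 2)) ^ p.1 *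
      FreeGroup.of 1 ^ p.2)).prod := by
    rw [hw, hl, List.map_map]; rfl
  have hl0 : ∀ p ∈ l, p.1 ≠ 0 ∧ p.2 ≠ 0 := by
    intro p hp
    simp only [hl, List.mem_map] at hp
    obtain ⟨i, _, rfl⟩ := hp
    exact ⟨hn i, hm i⟩
  have e1 : (l.map (fun p => |p.1| + |p.2|)).sum = ∑ i, |n i| + ∑ i, |m i| := by
    rw [hl, List.map_map, ← Finset.sum_add_distrib, Fin.sum_univ_def]; rfl
  have e2 : (l.map Prod.fst).sum = ∑ i, n i := by
    rw [hl, List.map_map, Fin.sum_univ_def]; rfl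
  have e3 : (l.map Prod.snd).sum = ∑ i, m i := by
    rw [hl, List.map_map, Fin.sum_univ_def]; rfl
  have hpow : ∀ N : ℕ, (N : ℤ) * (∑ i, |n i| + ∑ i, |m i|) ≤
      N * (|∑ i, n i| + |∑ i, m i|) + K := by
    intro N
    have a1 := hst N
    rw [hw', PrimSign.nm_prod_pow l hl0, PrimSign.wt_prod, e1, e2, e3] at a1
    have a2 := abs_add_le ((∑ i, n i) * ε) ((∑ i, m i) * δ)
    rw [abs_mul, abs_mul, hε, hδ, mul_one, mul_one] at a2
    have := mul_le_mul_of_nonneg_left a2 (Int.natCast_nonneg N)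
    linarith
  have hle : ∑ i, |n i| + ∑ i, |m i| ≤ |∑ i, n i| + |∑ i, m i| := by
    by_contra hcon
    have h1 : |∑ i, n i| + |∑ i, m i| + 1 ≤ ∑ i, |n i| + ∑ i, |m i| := by omega
    have h2 := hpow (K.toNat + 1)
    have h3 := mul_le_mul_of_nonneg_left h1 (Int.natCast_nonneg (K.toNat + 1))
    have h4 := Int.self_le_toNat K
    push_cast at h2 h3
    linarith
  have b1 := Finset.abs_sum_le_sum_abs n Finset.univ
  have b2 := Finset.abs_sum_le_sum_abs m Finset.univ
  exact ⟨PrimSign.same_sign n hn (by linarith), PrimSign.same_sign m hm (by linarith)⟩
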